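/- arXiv:1208.1981 — 2 statements merged into one kernel-verified Lean document; each statement's English description precedes it below -/
import Mathlib

section
/- (Theorem 1(iii), postulate FD4con.) Suppose D^d is quasiconcave, i.e. for every cloud Y in ℝ^d and every α > 0 the upper level set {y ∈ ℝ^d : D^d(y | Y) ≥ α} is convex. Then the Φ-depth is quasiconcave: for every α > 0 the upper level set D_α(X) = {z ∈ E : D(z | X) ≥ α} is a convex subset of E; equivalently, D(λ y + (1 − λ) z | X) ≥ min(D(y | X), D(z | X)) for all y, z ∈ E and λ ∈ [0,1]. -/
/-!
A superlevel set of the `Φ`-depth is the intersection over `φ ∈ Φ` of the preimages under `φ` of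
superlevel sets of the given depth, and linear preimages and intersections preserve convexity.
Since the depth is nonnegative, its superlevel sets at levels `α ≤ 0` are the whole space, so
convexity at positive levels is full quasiconcavity and yields the inequality with the minimum.
-/

section Quasiconcave

variable {𝕜 E F β : Type*} [Semiring 𝕜] [PartialOrder 𝕜] [AddCommMonoid E] [AddCommMonoid F]

theorem quasiconcaveOn_of_forall_lt_convex [SMul 𝕜 E] [LinearOrder β] {s : Set E} {f : E → β}
    {m : β} (hs : Convex 𝕜 s) (hm : ∀ x ∈ s, m ≤ f x)
    (hf : ∀ r, m < r → Convex 𝕜 {x ∈ s | r ≤ f x}) : QuasiconcaveOn 𝕜 s f := by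
  intro r
  rcases le_or_gt r m with hr | hr
  · rwa [Set.sep_eq_self_iff_mem_true.2 fun x hx => hr.trans (hm x hx)]
  · exact hf r hr

theorem quasiconcaveOn_comp_linear [Module 𝕜 E] [Module 𝕜 F] [LE β] {L : Type*} [FunLike L E F]
    [LinearMapClass L 𝕜 E F] {s : Set F} {f : F → β} (hf : QuasiconcaveOn 𝕜 s f) (φ : L) :
    QuasiconcaveOn 𝕜 (φ ⁻¹' s) (f ∘ φ) :=
  fun r => (hf r).linear_preimage (φ : E →ₗ[𝕜] F)

theorem quasiconcaveOn_iInf [SMul 𝕜 E] [ConditionallyCompleteLattice β] {ι : Sort*} [Nonempty ι]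
    {s : Set E} {f : ι → E → β} (hbdd : ∀ x ∈ s, BddBelow (Set.range fun i => f i x))
    (hf : ∀ i, QuasiconcaveOn 𝕜 s (f i)) : QuasiconcaveOn 𝕜 s fun x => ⨅ i, f i x := by
  intro r
  have superlevel_eq : {x ∈ s | r ≤ ⨅ i, f i x} = ⋂ i, {x ∈ s | r ≤ f i x} := by
    ext x
    simp only [Set.mem_iInter, Set.mem_ofPred_eq, forall_and, forall_const]
    exact and_congr_right fun hx => le_ciInf_iff (hbdd x hx)
  rw [superlevel_eq]
  exact convex_iInter fun i => hf i r

end Quasiconcave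

section PhiDepth

variable {𝕜 E F L ι : Type*} [FunLike L E F]

/-- The `Φ`-depth of a point `z` with respect to a data cloud `X`: the infimum over the projections
`φ ∈ Φ` of the depth `Dd` of `φ z` in the projected cloud `φ ∘ X`. Clouds are families over an
arbitrary index type, and the value is the junk infimum `0` if `Φ` is empty or if these depths are
unbounded below. -/
noncomputable def phiDepth (Dd : F → (ι → F) → ℝ) (Φ : Set L) (z : E) (X : ι → E) : ℝ :=
  ⨅ φ : Φ, Dd (φ.1 z) (φ.1 ∘ X)

theorem phiDepth_eq_sInf (Dd : F → (ι → F) → ℝ) (Φ : Set L) (z : E) (X : ι → E) :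
    phiDepth Dd Φ z X = sInf {v : ℝ | ∃ φ ∈ Φ, v = Dd (φ z) fun i => φ (X i)} := by
  have image_eq : {v : ℝ | ∃ φ ∈ Φ, v = Dd (φ z) fun i => φ (X i)} =
      (fun φ : L => Dd (φ z) (φ ∘ X)) '' Φ := by
    ext v
    exact exists_congr fun φ => and_congr_right fun _ => eq_comm
  rw [image_eq, sInf_image', phiDepth]

variable [AddCommMonoid E] [AddCommMonoid F]

theorem quasiconcaveOn_phiDepth [Semiring 𝕜] [PartialOrder 𝕜] [Module 𝕜 E] [Module 𝕜 F]
    [LinearMapClass L 𝕜 E F] {Dd : F → (ι → F) → ℝ} {m : ℝ} (hm : ∀ y Y, m ≤ Dd y Y)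
    (hqc : ∀ Y, QuasiconcaveOn 𝕜 Set.univ fun y => Dd y Y) {Φ : Set L} (hΦ : Φ.Nonempty)
    (X : ι → E) : QuasiconcaveOn 𝕜 Set.univ fun z => phiDepth Dd Φ z X := by
  have : Nonempty Φ := hΦ.to_subtype
  refine quasiconcaveOn_iInf (fun z _ => ⟨m, ?_⟩) fun φ =>
    quasiconcaveOn_comp_linear (hqc (φ.1 ∘ X)) φ.1
  exact Set.forall_mem_range.2 fun φ => hm (φ.1 z) (φ.1 ∘ X)

theorem phi_depth_FD4con_general [Ring 𝕜] [PartialOrder 𝕜] [IsOrderedAddMonoid 𝕜] [Module 𝕜 E]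
    [Module 𝕜 F] [LinearMapClass L 𝕜 E F] {Dd : F → (ι → F) → ℝ} (hDd : ∀ y Y, 0 ≤ Dd y Y)
    (hqc : ∀ Y, ∀ α : ℝ, 0 < α → Convex 𝕜 {y | α ≤ Dd y Y}) {Φ : Set L} (hΦ : Φ.Nonempty)
    (X : ι → E) :
    (∀ α : ℝ, 0 < α → Convex 𝕜 {z | α ≤ phiDepth Dd Φ z X}) ∧
      ∀ y z : E, ∀ l ∈ Set.Icc (0 : 𝕜) 1,
        min (phiDepth Dd Φ y X) (phiDepth Dd Φ z X) ≤ phiDepth Dd Φ (l • y + (1 - l) • z) X := by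
  have quasiconcave_Dd (Y : ι → F) : QuasiconcaveOn 𝕜 Set.univ fun y => Dd y Y :=
    quasiconcaveOn_of_forall_lt_convex convex_univ (fun y _ => hDd y Y) (by simpa using hqc Y)
  have quasiconcave_phiDepth : QuasiconcaveOn 𝕜 Set.univ fun z => phiDepth Dd Φ z X :=
    quasiconcaveOn_phiDepth hDd quasiconcave_Dd hΦ X
  refine ⟨fun α _ => by simpa using quasiconcave_phiDepth α, fun y z l hl => ?_⟩
  exact (quasiconcaveOn_iff_min_le.1 quasiconcave_phiDepth).2 (Set.mem_univ y) (Set.mem_univ z)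
    hl.1 (sub_nonneg.2 hl.2) (add_sub_cancel l 1)

end PhiDepth

/-- Theorem 1(iii), postulate FD4con: if the d-variate depth is quasiconcave,
then the Φ-depth is quasiconcave. -/
theorem phi_depth_FD4con
    {E : Type*} [NormedAddCommGroup E] [NormedSpace ℝ E]
    {n d : ℕ} (hn : 0 < n) (hd : 0 < d)
    (Dd : (Fin d → ℝ) → (Fin n → (Fin d → ℝ)) → ℝ)
    (hDd01 : ∀ y Y, Dd y Y ∈ Set.Icc (0 : ℝ) 1)
    (Φ : Set (E →L[ℝ] (Fin d → ℝ))) (hΦ : Φ.Nonempty)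
    (D : E → (Fin n → E) → ℝ)
    (hD : ∀ z X, D z X = sInf {v : ℝ | ∃ φ ∈ Φ, v = Dd (φ z) (fun i => φ (X i))})
    (hqc : ∀ (Y : Fin n → (Fin d → ℝ)) (α : ℝ), 0 < α →
      Convex ℝ {y : Fin d → ℝ | α ≤ Dd y Y})
    (X : Fin n → E) :
    (∀ α : ℝ, 0 < α → Convex ℝ {z : E | α ≤ D z X}) ∧
      (∀ y z : E, ∀ l ∈ Set.Icc (0 : ℝ) 1,
        min (D y X) (D z X) ≤ D (l • y + (1 - l) • z) X) := by
  obtain rfl : D = phiDepth Dd Φ := funext₂ fun z X => (hD z X).trans (phiDepth_eq_sInf ..).symm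
  exact phi_depth_FD4con_general (fun y Y => (hDd01 y Y).1) hqc hΦ X
end

section
/- (Proposition 4, postulate FD2F for the location-slope depth.) Suppose D² is linear invariant: D²(A y | A x¹, …, A xⁿ) = D²(y | x¹, …, xⁿ) for every invertible linear map A : ℝ² → ℝ² and every cloud in ℝ². Let a : ℝ → ℝ be differentiable with a(t) ≠ 0 for all t ∈ T, and for functions u let a·u denote the pointwise product, (a·u)(t) = a(t)u(t), whose derivative is (a·u)'(t) = a'(t)u(t) + a(t)u'(t). Then LSD(a·z | a·x¹, …, a·xⁿ) = LSD(z | x¹, …, xⁿ). -/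
/-!
By the Leibniz rule, multiplying a curve by `a` acts on its location-slope pair at time `t` by the
triangular map `(p, q) ↦ (a t • p, a t • q + a' t • p)`. This map is the same for every curve and is
invertible when `a t ≠ 0`, so a linear invariant depth does not change at any `t ∈ T`.
-/

section LinearInvariance

variable (R : Type*) {V ι β : Type*} [Semiring R] [AddCommMonoid V] [Module R V]

/-- Linear invariance of a data depth `D` on an `R`-module `V`: the depth `D y Y` of a point `y` in
the cloud `Y` is unchanged when an invertible linear map moves the point and the cloud together. -/
def IsLinearInvariant (D : V → (ι → V) → β) : Prop :=
  ∀ (A : V ≃ₗ[R] V) (y : V) (Y : ι → V), D (A y) (fun i => A (Y i)) = D y Y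

end LinearInvariance

/-- The triangular automorphism `(p, q) ↦ (c • p, c • q + b • p)` of `E × E`: the action on
location-slope pairs of multiplication by a function with value `c` and derivative `b`. -/
def leibnizEquiv {K : Type*} (E : Type*) [Field K] [AddCommGroup E] [Module K E] {c : K}
    (hc : c ≠ 0) (b : K) : (E × E) ≃ₗ[K] (E × E) :=
  (LinearEquiv.smulOfNeZero K E c hc).skewProd (LinearEquiv.smulOfNeZero K E c hc)
    (b • LinearMap.id)

section LocationSlope

variable {𝕜 E ι β : Type*} [NontriviallyNormedField 𝕜] [NormedAddCommGroup E] [NormedSpace 𝕜 E]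

/-- The location-slope pair `(u t, u' t)` of a curve `u` at time `t`. -/
noncomputable def locationSlope (u : 𝕜 → E) (t : 𝕜) : E × E :=
  (u t, deriv u t)

/-- The depths of the location-slope pairs of `z` in the clouds of location-slope pairs of the
`x i`, over all times in `T`. The location-slope depth is the infimum of this set; keeping the
set itself avoids the junk value of `sInf` on empty or unbounded sets. -/
def locationSlopeDepthValues (T : Set 𝕜) (D : E × E → (ι → E × E) → β) (z : 𝕜 → E)
    (x : ι → 𝕜 → E) : Set β :=
  {v | ∃ t ∈ T, v = D (locationSlope z t) (fun i => locationSlope (x i) t)}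

theorem locationSlope_smul {a : 𝕜 → 𝕜} {u : 𝕜 → E} {t : 𝕜} (ha : DifferentiableAt 𝕜 a t)
    (hu : DifferentiableAt 𝕜 u t) (hat : a t ≠ 0) :
    locationSlope (fun s => a s • u s) t = leibnizEquiv E hat (deriv a t) (locationSlope u t) :=
  Prod.ext rfl (deriv_fun_smul ha hu)

theorem IsLinearInvariant.depth_locationSlope_smul {D : E × E → (ι → E × E) → β}
    (hD : IsLinearInvariant 𝕜 D) {a : 𝕜 → 𝕜} {z : 𝕜 → E} {x : ι → 𝕜 → E} {t : 𝕜}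
    (ha : DifferentiableAt 𝕜 a t) (hz : DifferentiableAt 𝕜 z t)
    (hx : ∀ i, DifferentiableAt 𝕜 (x i) t) (hat : a t ≠ 0) :
    D (locationSlope (fun s => a s • z s) t) (fun i => locationSlope (fun s => a s • x i s) t) =
      D (locationSlope z t) (fun i => locationSlope (x i) t) := by
  simp only [locationSlope_smul ha hz hat, fun i => locationSlope_smul ha (hx i) hat]
  exact hD _ _ _

theorem location_slope_depth_FD2F_general {D : E × E → (ι → E × E) → β}
    (hD : IsLinearInvariant 𝕜 D) {T : Set 𝕜} {a : 𝕜 → 𝕜} {z : 𝕜 → E} {x : ι → 𝕜 → E}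
    (ha : ∀ t ∈ T, DifferentiableAt 𝕜 a t) (hz : ∀ t ∈ T, DifferentiableAt 𝕜 z t)
    (hx : ∀ i, ∀ t ∈ T, DifferentiableAt 𝕜 (x i) t) (ha0 : ∀ t ∈ T, a t ≠ 0) :
    locationSlopeDepthValues T D (fun t => a t • z t) (fun i t => a t • x i t) =
      locationSlopeDepthValues T D z x := by
  ext v
  refine exists_congr fun t => and_congr_right fun ht => ?_
  rw [hD.depth_locationSlope_smul (ha t ht) (hz t ht) (fun i => hx i t ht) (ha0 t ht)]

end LocationSlope

/-- Proposition 4, postulate FD2F: the location-slope depth is function-scale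
invariant whenever the underlying bivariate depth is linear invariant. -/
theorem location_slope_depth_FD2F
    {n : ℕ} (hn : 0 < n) (T : Set ℝ) (hT : T.Nonempty)
    (D2 : (ℝ × ℝ) → (Fin n → ℝ × ℝ) → ℝ)
    (hD201 : ∀ y Y, D2 y Y ∈ Set.Icc (0 : ℝ) 1)
    (hlin : ∀ (A : (ℝ × ℝ) ≃ₗ[ℝ] (ℝ × ℝ)) (y : ℝ × ℝ) (Y : Fin n → ℝ × ℝ),
      D2 (A y) (fun i => A (Y i)) = D2 y Y)
    (LSD : (ℝ → ℝ) → (Fin n → ℝ → ℝ) → ℝ)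
    (hLSD : ∀ z x, LSD z x = sInf {v : ℝ | ∃ t ∈ T,
      v = D2 (z t, deriv z t) (fun i => (x i t, deriv (x i) t))})
    (z : ℝ → ℝ) (hz : Differentiable ℝ z)
    (x : Fin n → ℝ → ℝ) (hx : ∀ i, Differentiable ℝ (x i))
    (a : ℝ → ℝ) (ha : Differentiable ℝ a) (ha0 : ∀ t ∈ T, a t ≠ 0) :
    LSD (fun t => a t * z t) (fun i t => a t * x i t) = LSD z x := by
  rw [hLSD, hLSD]
  exact congrArg sInf (location_slope_depth_FD2F_general hlin (fun t _ => ha t) (fun t _ => hz t)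
    (fun i t _ => hx i t) ha0)
end
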